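/- Private minimax lower bounds for the uniform support model: consider the family (U([0,θ])^{⊗n})_{θ∈(0,1]} of n-fold products of uniform distributions on [0,θ], the absolute-value metric and the squared loss. (i) If nε > 1, then the minimax risk over ε-DP mechanisms is at least e^{−1}/(8(nε)²). (ii) If n√ρ > 1, then the minimax risk over ρ-zCDP mechanisms is at least (1 − 1/√2)/(8n²ρ). -/

import Mathlib

open MeasureTheory ProbabilityTheory Real
open scoped ENNReal NNReal

variable {𝓧 𝓨 : Type*} [MeasurableSpace 𝓧] [MeasurableSpace 𝓨]

/-- `(ε, δ)`-differential privacy of a Markov kernel on datasets of `n` points. -/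
def IsDP [DecidableEq 𝓧] {n : ℕ} (M : Kernel (Fin n → 𝓧) 𝓨) (ε δ : ℝ) : Prop :=
  ∀ x y : Fin n → 𝓧, hammingDist x y ≤ 1 →
    ∀ S : Set 𝓨, MeasurableSet S →
      M x S ≤ ENNReal.ofReal (Real.exp ε) * M y S + ENNReal.ofReal δ

open scoped Classical in
/-- The Renyi divergence of order `a`. -/
noncomputable def renyiDiv {α : Type*} [MeasurableSpace α] (a : ℝ) (P Q : Measure α) : ℝ≥0∞ :=
  if P ≪ Q ∧ ∫⁻ x, (P.rnDeriv Q x) ^ a ∂Q ≠ ⊤ then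
    ENNReal.ofReal ((a - 1)⁻¹ * Real.log (∫⁻ x, (P.rnDeriv Q x) ^ a ∂Q).toReal)
  else ⊤

/-- `ρ`-zero-concentrated differential privacy of a Markov kernel. -/
def IsZCDP [DecidableEq 𝓧] {n : ℕ} (M : Kernel (Fin n → 𝓧) 𝓨) (ρ : ℝ) : Prop :=
  ∀ x y : Fin n → 𝓧, hammingDist x y ≤ 1 → ∀ a : ℝ, 1 < a →
    renyiDiv a (M x) (M y) ≤ ENNReal.ofReal (ρ * a)

/-- The uniform distribution on `[0, θ]`, as a measure on `ℝ`. -/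
noncomputable def unif (θ : ℝ) : Measure ℝ :=
  ENNReal.ofReal θ⁻¹ • volume.restrict (Set.Icc 0 θ)

/-- The minimax risk over randomized mechanisms `M : [0,1]^n → Θ = (0,1]` satisfying the
privacy condition `C`, for the uniform support model `θ ↦ U([0,θ])^{⊗n}`, the absolute-value
metric and the squared loss. -/
noncomputable def unifPrivMinimax (n : ℕ) (C : Kernel (Fin n → ℝ) ℝ → Prop) : ℝ≥0∞ :=
  ⨅ M ∈ {M : Kernel (Fin n → ℝ) ℝ | IsMarkovKernel M ∧ C M ∧
      ∀ x, ∀ᵐ t ∂(M x), t ∈ Set.Ioc (0 : ℝ) 1},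
    ⨆ θ ∈ Set.Ioc (0 : ℝ) 1,
      ∫⁻ x, ∫⁻ t, ENNReal.ofReal (|t - θ| ^ 2) ∂(M x)
        ∂(Measure.pi fun _ : Fin n => unif θ)

/-!
Le Cam's two-point method with a coupling. Compare the parameters `1` and `1 - Δ`. A sample of
`U([0, 1])` becomes one of `U([0, 1 - Δ])` by moving only the points above `1 - Δ`, so the two
`n`-fold samples are coupled at expected Hamming distance `n Δ`. Privacy limits how far the law of
the output can move: by group privacy, testing two data sets at Hamming distance `k` has total
error at least `exp (-k ε)` under `ε`-DP, and at least `1 - k √(ρ / 2)` under `ρ`-zCDP. The latter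
is the triangle inequality for total variation after a Pinsker inequality
`2 (P S - Q S)² ≤ D_a(P‖Q)` for `a > 1`, which follows from Hölder's inequality and Hoeffding's
lemma. Averaging over the coupling, an estimator distinguishing the two parameters up to `Δ / 2`
must fail often; take `Δ = 1 / (n ε)`, respectively `Δ = 1 / (n √ρ)`.
-/

section Hamming

variable {ι : Type*} [Fintype ι] {β : ι → Type*} [∀ i, DecidableEq (β i)]

theorem exists_hammingDist_eq_one_of_ne {x y : ∀ i, β i} (hxy : x ≠ y) :
    ∃ z, hammingDist x z = 1 ∧ hammingDist x y = hammingDist z y + 1 := by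
  classical
  obtain ⟨i, hi⟩ := Function.ne_iff.1 hxy
  refine ⟨Function.update x i (y i), ?_, ?_⟩
  · have h_eq : ({j | x j ≠ Function.update x i (y i) j} : Finset ι) = {i} := by
      ext j
      rcases eq_or_ne j i with rfl | hj <;> simp [*]
    rw [hammingDist, h_eq, Finset.card_singleton]
  · have h_eq : ({j | Function.update x i (y i) j ≠ y j} : Finset ι)
        = ({j | x j ≠ y j} : Finset ι).erase i := by
      ext j
      rcases eq_or_ne j i with rfl | hj <;> simp [*]
    rw [hammingDist, hammingDist, h_eq, Finset.card_erase_add_one (by simpa using hi)]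

theorem le_iterate_hammingDist {γ : Type*} [Preorder γ] {f : (∀ i, β i) → γ} {g : γ → γ}
    (hg : Monotone g) (h : ∀ x y, hammingDist x y = 1 → f x ≤ g (f y)) (x y : ∀ i, β i) :
    f x ≤ g^[hammingDist x y] (f y) := by
  induction hk : hammingDist x y generalizing x with
  | zero => rw [eq_of_hammingDist_eq_zero hk, Function.iterate_zero_apply]
  | succ k ih =>
    obtain ⟨z, hxz, hzy⟩ := exists_hammingDist_eq_one_of_ne (x := x) (y := y)
      (hammingDist_ne_zero.1 (by lia))
    rw [Function.iterate_succ_apply']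
    exact (h x z hxz).trans (hg (ih z (by lia)))

theorem lintegral_hammingDist_pi {Ω α : Type*} [MeasurableSpace Ω] [DecidableEq α]
    (μ : Measure Ω) [IsProbabilityMeasure μ] {f g : Ω → α} (h : MeasurableSet {ω | f ω ≠ g ω}) :
    ∫⁻ ω, (hammingDist (fun i => f (ω i)) (fun i => g (ω i)) : ℝ≥0∞) ∂Measure.pi (fun _ : ι => μ)
      = Fintype.card ι * μ {ω | f ω ≠ g ω} := by
  set D : Set Ω := {ω | f ω ≠ g ω}
  have h_sum (ω : ι → Ω) : (hammingDist (fun i => f (ω i)) (fun i => g (ω i)) : ℝ≥0∞)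
      = ∑ i, D.indicator 1 (ω i) := by
    simp only [hammingDist, Finset.card_filter, Nat.cast_sum, Set.indicator_apply, D,
      Set.mem_ofPred_eq, Nat.cast_ite, Nat.cast_one, Nat.cast_zero, Pi.one_apply]
  have h_meas : Measurable (D.indicator (1 : Ω → ℝ≥0∞)) := measurable_one.indicator h
  have h_coord (i : ι) : ∫⁻ ω, D.indicator 1 (ω i) ∂Measure.pi (fun _ : ι => μ) = μ D := by
    rw [(measurePreserving_eval (fun _ : ι => μ) i).lintegral_comp h_meas,
      lintegral_indicator_one h]
  calc _ = ∫⁻ ω, ∑ i, D.indicator 1 (ω i) ∂Measure.pi (fun _ : ι => μ) := by simp only [h_sum]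
    _ = ∑ i, ∫⁻ ω, D.indicator 1 (ω i) ∂Measure.pi (fun _ : ι => μ) :=
        lintegral_finsetSum _ fun i _ => h_meas.comp (measurable_pi_apply i)
    _ = Fintype.card ι * μ D := by
        simp only [h_coord, Finset.sum_const, Finset.card_univ, nsmul_eq_mul]

end Hamming

section RenyiDivergence

variable {α : Type*} [MeasurableSpace α] {P Q : Measure α}

theorem lintegral_rnDeriv_rpow_le_of_renyiDiv_le {a D : ℝ} (ha : 1 < a) (hD : 0 ≤ D)
    (h : renyiDiv a P Q ≤ ENNReal.ofReal D) :
    P ≪ Q ∧ ∫⁻ x, (P.rnDeriv Q x) ^ a ∂Q ≤ ENNReal.ofReal (exp ((a - 1) * D)) := by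
  unfold renyiDiv at h
  split_ifs at h with h_fin
  · refine ⟨h_fin.1, ENNReal.le_ofReal_iff_toReal_le h_fin.2 (exp_pos _).le |>.2 ?_⟩
    rw [ENNReal.ofReal_le_ofReal_iff hD, inv_mul_le_iff₀ (sub_pos.2 ha)] at h
    exact (le_exp_log _).trans (exp_le_exp.2 h)
  · exact absurd h (not_le.2 ENNReal.ofReal_lt_top)

theorem lintegral_le_lintegral_rnDeriv_rpow_mul [P.HaveLebesgueDecomposition Q]
    (hPQ : P ≪ Q) {p q : ℝ} (hpq : p.HolderConjugate q) {h : α → ℝ≥0∞} (hh : AEMeasurable h Q) :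
    ∫⁻ x, h x ∂P
      ≤ (∫⁻ x, (P.rnDeriv Q x) ^ p ∂Q) ^ (1 / p) * (∫⁻ x, h x ^ q ∂Q) ^ (1 / q) := by
  rw [← lintegral_rnDeriv_mul hPQ hh]
  exact ENNReal.lintegral_mul_le_Lp_mul_Lq Q hpq (Measure.measurable_rnDeriv P Q).aemeasurable hh

theorem ofReal_exp_integral_le_lintegral [IsProbabilityMeasure P] {X : α → ℝ}
    (hX : Integrable X P) :
    ENNReal.ofReal (exp (∫ x, X x ∂P)) ≤ ∫⁻ x, ENNReal.ofReal (exp (X x)) ∂P := by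
  have h_meas : AEStronglyMeasurable (fun x => exp (X x)) P :=
    continuous_exp.comp_aestronglyMeasurable hX.1
  by_cases h_exp : Integrable (fun x => exp (X x)) P
  · rw [← ofReal_integral_eq_lintegral_ofReal h_exp (.of_forall fun x => (exp_pos _).le)]
    exact ENNReal.ofReal_le_ofReal <| convexOn_exp.map_integral_le continuous_exp.continuousOn
      isClosed_univ (.of_forall fun x => Set.mem_univ _) hX h_exp
  · rw [← lintegral_ofReal_ne_top_iff_integrable h_meas (.of_forall fun x => (exp_pos _).le),
      not_not] at h_exp
    rw [h_exp]
    exact le_top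

variable {X : α → ℝ} {c : ℝ≥0}

theorem lintegral_exp_mul_le_of_hasSubgaussianMGF (hX : HasSubgaussianMGF X c Q) (t : ℝ) :
    ∫⁻ x, ENNReal.ofReal (exp (t * X x)) ∂Q ≤ ENNReal.ofReal (exp (c * t ^ 2 / 2)) := by
  rw [← ofReal_integral_eq_lintegral_ofReal (hX.integrable_exp_mul t)
    (.of_forall fun x => (exp_pos _).le)]
  exact ENNReal.ofReal_le_ofReal (hX.mgf_le t)

variable [IsProbabilityMeasure P] [IsProbabilityMeasure Q]

/- Jensen under `P`, then Hölder to change measure to `Q`: the exponent `t / q` is chosen so that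
the `q`-th power of the integrand is `exp (t X)`; all three exponents then have a factor `1 / q`. -/
theorem mul_integral_le_of_renyiDiv_le {a D : ℝ} (ha : 1 < a) (hD : 0 ≤ D)
    (h : renyiDiv a P Q ≤ ENNReal.ofReal D) (hXP : Integrable X P)
    (hXQ : HasSubgaussianMGF X c Q) (t : ℝ) :
    t * ∫ x, X x ∂P ≤ D + c * t ^ 2 / 2 := by
  obtain ⟨hPQ, h_renyi⟩ := lintegral_rnDeriv_rpow_le_of_renyiDiv_le ha hD h
  set q := conjExponent a
  have hpq : a.HolderConjugate q := .conjExponent ha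
  have hq : 0 < q := hpq.symm.pos
  have h_mgf : ∫⁻ x, ENNReal.ofReal (exp (t / q * X x)) ^ q ∂Q
      ≤ ENNReal.ofReal (exp (c * t ^ 2 / 2)) := by
    have h_pow (x : α) : ENNReal.ofReal (exp (t / q * X x)) ^ q
        = ENNReal.ofReal (exp (t * X x)) := by
      rw [ENNReal.ofReal_rpow_of_pos (exp_pos _), ← exp_mul]
      congr 2
      field_simp
    simpa only [h_pow] using lintegral_exp_mul_le_of_hasSubgaussianMGF hXQ t
  have h_exp : ENNReal.ofReal (exp (t / q * ∫ x, X x ∂P))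
      ≤ ENNReal.ofReal (exp ((D + c * t ^ 2 / 2) / q)) := by
    calc ENNReal.ofReal (exp (t / q * ∫ x, X x ∂P))
        ≤ ∫⁻ x, ENNReal.ofReal (exp (t / q * X x)) ∂P := by
          rw [← integral_const_mul]
          exact ofReal_exp_integral_le_lintegral (hXP.const_mul _)
      _ ≤ (∫⁻ x, (P.rnDeriv Q x) ^ a ∂Q) ^ (1 / a)
            * (∫⁻ x, ENNReal.ofReal (exp (t / q * X x)) ^ q ∂Q) ^ (1 / q) :=
          lintegral_le_lintegral_rnDeriv_rpow_mul hPQ hpq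
            (hXQ.aemeasurable.const_mul _).exp.ennreal_ofReal
      _ ≤ ENNReal.ofReal (exp ((a - 1) * D)) ^ (1 / a)
            * ENNReal.ofReal (exp (c * t ^ 2 / 2)) ^ (1 / q) := by
          have := hpq.pos
          gcongr
      _ = ENNReal.ofReal (exp ((D + c * t ^ 2 / 2) / q)) := by
          rw [ENNReal.ofReal_rpow_of_pos (exp_pos _), ENNReal.ofReal_rpow_of_pos (exp_pos _),
            ← ENNReal.ofReal_mul (rpow_nonneg (exp_pos _).le _), ← exp_mul, ← exp_mul, ← exp_add]
          congr 2
          have h_inv : q⁻¹ = (a - 1) / a := inv_div a (a - 1)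
          rw [one_div q, div_eq_mul_inv _ q, h_inv]
          field_simp [hpq.pos.ne']
  rw [ENNReal.ofReal_le_ofReal_iff (exp_pos _).le, exp_le_exp, div_mul_eq_mul_div] at h_exp
  exact (div_le_div_iff_of_pos_right hq).1 h_exp

theorem sq_integral_le_of_renyiDiv_le {a D : ℝ} (ha : 1 < a) (hD : 0 ≤ D)
    (h : renyiDiv a P Q ≤ ENNReal.ofReal D) (hXP : Integrable X P)
    (hXQ : HasSubgaussianMGF X c Q) :
    (∫ x, X x ∂P) ^ 2 ≤ 2 * c * D := by
  have h_discrim : discrim ((c : ℝ) / 2) (-∫ x, X x ∂P) D ≤ 0 := discrim_le_zero fun t => by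
    linarith [mul_integral_le_of_renyiDiv_le ha hD h hXP hXQ t]
  rw [discrim] at h_discrim
  linarith

theorem two_mul_sq_measureReal_sub_le_of_renyiDiv_le {a D : ℝ} (ha : 1 < a) (hD : 0 ≤ D)
    (h : renyiDiv a P Q ≤ ENNReal.ofReal D) {S : Set α} (hS : MeasurableSet S) :
    2 * (P.real S - Q.real S) ^ 2 ≤ D := by
  have h_int (ν : Measure α) [IsFiniteMeasure ν] : Integrable (S.indicator (1 : α → ℝ)) ν :=
    (integrable_const 1).indicator hS
  have h_mean (ν : Measure α) : ∫ x, S.indicator (1 : α → ℝ) x ∂ν = ν.real S :=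
    integral_indicator_one hS
  have h_hoeffding := hasSubgaussianMGF_of_mem_Icc (μ := Q) (X := S.indicator 1)
    (a := 0) (b := 1) (h_int Q).aemeasurable
    (.of_forall fun x => ⟨Set.indicator_nonneg (fun _ _ => zero_le_one) x,
      Set.indicator_le_self' (fun _ _ => zero_le_one) x⟩)
  have h_centred : ∫ x, (S.indicator 1 x - ∫ x, S.indicator (1 : α → ℝ) x ∂Q) ∂P
      = P.real S - Q.real S := by
    rw [integral_sub (h_int P) (integrable_const _), h_mean, h_mean, integral_const,
      probReal_univ, one_smul]
  have h_sq := sq_integral_le_of_renyiDiv_le ha hD h ((h_int P).sub (integrable_const _))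
    h_hoeffding
  norm_num [h_centred] at h_sq
  linarith

theorem measure_le_add_of_forall_renyiDiv_le {ρ : ℝ} (hρ : 0 ≤ ρ)
    (h : ∀ a : ℝ, 1 < a → renyiDiv a P Q ≤ ENNReal.ofReal (ρ * a)) {S : Set α}
    (hS : MeasurableSet S) :
    P S ≤ Q S + ENNReal.ofReal √(ρ / 2) := by
  have h_sq : 2 * (P.real S - Q.real S) ^ 2 ≤ ρ := by
    have h_lim : Filter.Tendsto (fun a : ℝ => ρ * a) (nhdsWithin 1 (Set.Ioi 1)) (nhds ρ) := by
      simpa using ((continuous_const_mul ρ).tendsto 1).mono_left nhdsWithin_le_nhds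
    refine ge_of_tendsto h_lim (eventually_nhdsWithin_of_forall fun a ha => ?_)
    rw [Set.mem_Ioi] at ha
    exact two_mul_sq_measureReal_sub_le_of_renyiDiv_le ha (by positivity) (h a ha) hS
  have h_sub : P.real S - Q.real S ≤ √(ρ / 2) := le_sqrt_of_sq_le (by linarith)
  rw [← ofReal_measureReal, ← ofReal_measureReal (μ := Q),
    ← ENNReal.ofReal_add measureReal_nonneg (sqrt_nonneg _)]
  exact ENNReal.ofReal_le_ofReal (by linarith)

end RenyiDivergence

/-- Any test of `x` against `y` that looks only at the output of the mechanism `M` has total error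
at least `A - B * hammingDist x y`. This is the only consequence of privacy that Le Cam's method
needs; affine dependence on the distance lets the bound pass through expectations. The inequality
is written additively because subtraction in `ℝ≥0∞` is truncated. -/
def HasTestErrorBound [DecidableEq 𝓧] {n : ℕ} (M : Kernel (Fin n → 𝓧) 𝓨) (A B : ℝ≥0∞) : Prop :=
  ∀ x y : Fin n → 𝓧, ∀ S : Set 𝓨, MeasurableSet S → A ≤ M x S + M y Sᶜ + B * hammingDist x y

section Privacy

variable [DecidableEq 𝓧] {n : ℕ} {M : Kernel (Fin n → 𝓧) 𝓨}

theorem IsDP.measure_le_pow_mul {ε : ℝ} (h : IsDP M ε 0) (x y : Fin n → 𝓧) {S : Set 𝓨}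
    (hS : MeasurableSet S) :
    M x S ≤ ENNReal.ofReal (exp ε) ^ hammingDist x y * M y S := by
  have h_iter := le_iterate_hammingDist (f := fun x => M x S) (g := (ENNReal.ofReal (exp ε) * ·))
    (fun _ _ hab => by dsimp only; gcongr) (fun x y hxy => by simpa using h x y hxy.le S hS) x y
  rwa [mul_left_iterate] at h_iter

theorem IsZCDP.measure_le_add_mul [IsMarkovKernel M] {ρ : ℝ} (hρ : 0 ≤ ρ) (h : IsZCDP M ρ)
    (x y : Fin n → 𝓧) {S : Set 𝓨} (hS : MeasurableSet S) :
    M x S ≤ M y S + ENNReal.ofReal √(ρ / 2) * hammingDist x y := by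
  have h_iter := le_iterate_hammingDist (f := fun x => M x S) (g := (· + ENNReal.ofReal √(ρ / 2)))
    (fun _ _ hab => by dsimp only; gcongr)
    (fun x y hxy => measure_le_add_of_forall_renyiDiv_le hρ (h x y hxy.le) hS) x y
  rwa [add_right_iterate, nsmul_eq_mul, mul_comm] at h_iter

theorem IsDP.ofReal_exp_neg_le [IsMarkovKernel M] {ε : ℝ} (hε : 0 ≤ ε) (h : IsDP M ε 0)
    (x y : Fin n → 𝓧) {S : Set 𝓨} (hS : MeasurableSet S) :
    ENNReal.ofReal (exp (-(hammingDist x y * ε))) ≤ M x S + M y Sᶜ := by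
  set r := ENNReal.ofReal (exp (-(hammingDist x y * ε)))
  have hr_one : r ≤ 1 := by
    rw [ENNReal.ofReal_le_one, exp_le_one_iff, neg_nonpos]
    positivity
  have hr_inv : r * ENNReal.ofReal (exp ε) ^ hammingDist x y = 1 := by
    rw [← ENNReal.ofReal_pow (exp_pos _).le, ← exp_nat_mul, ← ENNReal.ofReal_mul (exp_pos _).le,
      ← exp_add, neg_add_cancel, exp_zero, ENNReal.ofReal_one]
  calc r = r * M y S + r * M y Sᶜ := by rw [← mul_add, prob_add_prob_compl hS, mul_one]
    _ ≤ r * (ENNReal.ofReal (exp ε) ^ hammingDist x y * M x S) + 1 * M y Sᶜ := by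
        gcongr
        rw [hammingDist_comm]
        exact h.measure_le_pow_mul y x hS
    _ = M x S + M y Sᶜ := by rw [← mul_assoc, hr_inv, one_mul, one_mul]

/- The affine bound is the tangent line at `s` of the convex function `exp (-·)`. -/
theorem IsDP.hasTestErrorBound [IsMarkovKernel M] {ε : ℝ} (hε : 0 ≤ ε) (h : IsDP M ε 0) (s : ℝ) :
    HasTestErrorBound M (ENNReal.ofReal (exp (-s) * (1 + s))) (ENNReal.ofReal (exp (-s) * ε)) := by
  intro x y S hS
  set d := hammingDist x y
  have h_tangent : exp (-s) * (1 + s) ≤ exp (-(d * ε)) + exp (-s) * ε * d := by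
    have h_split : exp (-(d * ε)) = exp (-s) * exp (s - d * ε) := by rw [← exp_add]; ring_nf
    have h_mul := mul_le_mul_of_nonneg_left (add_one_le_exp (s - d * ε)) (exp_pos (-s)).le
    linarith
  calc ENNReal.ofReal (exp (-s) * (1 + s))
      ≤ ENNReal.ofReal (exp (-(d * ε)) + exp (-s) * ε * d) := ENNReal.ofReal_le_ofReal h_tangent
    _ = ENNReal.ofReal (exp (-(d * ε))) + ENNReal.ofReal (exp (-s) * ε) * d := by
        rw [ENNReal.ofReal_add (by positivity) (by positivity),
          ENNReal.ofReal_mul (q := d) (by positivity), ENNReal.ofReal_natCast]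
    _ ≤ M x S + M y Sᶜ + ENNReal.ofReal (exp (-s) * ε) * d := by
        gcongr
        exact h.ofReal_exp_neg_le hε x y hS

theorem IsZCDP.hasTestErrorBound [IsMarkovKernel M] {ρ : ℝ} (hρ : 0 ≤ ρ) (h : IsZCDP M ρ) :
    HasTestErrorBound M 1 (ENNReal.ofReal √(ρ / 2)) := by
  intro x y S hS
  calc 1 = M y S + M y Sᶜ := (prob_add_prob_compl hS).symm
    _ ≤ M x S + ENNReal.ofReal √(ρ / 2) * hammingDist y x + M y Sᶜ := by
        gcongr
        exact h.measure_le_add_mul hρ y x hS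
    _ = M x S + M y Sᶜ + ENNReal.ofReal √(ρ / 2) * hammingDist x y := by
        rw [hammingDist_comm, add_right_comm]

theorem HasTestErrorBound.sub_le {A B : ℝ≥0∞} (h : HasTestErrorBound M A B) (hB : B ≠ ⊤)
    {Ω : Type*} [MeasurableSpace Ω] (μ : Measure Ω) [IsProbabilityMeasure μ]
    {X Y : Ω → Fin n → 𝓧} (hX : Measurable X) (hY : Measurable Y) {S : Set 𝓨}
    (hS : MeasurableSet S) :
    A - B * ∫⁻ ω, hammingDist (X ω) (Y ω) ∂μ
      ≤ (μ.map X).bind M S + (μ.map Y).bind M Sᶜ := by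
  have h_bind {Z : Ω → Fin n → 𝓧} (hZ : Measurable Z) {U : Set 𝓨} (hU : MeasurableSet U) :
      (μ.map Z).bind M U = ∫⁻ ω, M (Z ω) U ∂μ := by
    rw [Measure.bind_apply hU M.aemeasurable, lintegral_map (M.measurable_coe hU) hZ]
  have hX_meas : Measurable fun ω => M (X ω) S := (M.measurable_coe hS).comp hX
  have hY_meas : Measurable fun ω => M (Y ω) Sᶜ := (M.measurable_coe hS.compl).comp hY
  rw [tsub_le_iff_right, h_bind hX hS, h_bind hY hS.compl]
  calc A = ∫⁻ _, A ∂μ := by rw [lintegral_const, measure_univ, mul_one]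
    _ ≤ ∫⁻ ω, (M (X ω) S + M (Y ω) Sᶜ + B * hammingDist (X ω) (Y ω)) ∂μ :=
        lintegral_mono fun ω => h (X ω) (Y ω) S hS
    _ = ∫⁻ ω, M (X ω) S ∂μ + ∫⁻ ω, M (Y ω) Sᶜ ∂μ + B * ∫⁻ ω, hammingDist (X ω) (Y ω) ∂μ := by
        have hXY_meas : Measurable fun ω => M (X ω) S + M (Y ω) Sᶜ := hX_meas.add hY_meas
        rw [lintegral_add_left hXY_meas, lintegral_add_left hX_meas, lintegral_const_mul' _ _ hB]

end Privacy

theorem mul_le_lintegral_add_lintegral_of_testError {ν₀ ν₁ : Measure 𝓨} {l₀ l₁ : 𝓨 → ℝ≥0∞}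
    (hl₀ : Measurable l₀) (hl₁ : Measurable l₁) {δ c : ℝ≥0∞} (h_sep : ∀ t, δ ≤ l₀ t ∨ δ ≤ l₁ t)
    (h_test : ∀ S, MeasurableSet S → c ≤ ν₀ S + ν₁ Sᶜ) :
    δ * c ≤ ∫⁻ t, l₀ t ∂ν₀ + ∫⁻ t, l₁ t ∂ν₁ := by
  calc δ * c ≤ δ * (ν₀ {t | δ ≤ l₀ t} + ν₁ {t | δ ≤ l₀ t}ᶜ) := by
        gcongr
        exact h_test _ (measurableSet_le measurable_const hl₀)
    _ ≤ δ * ν₀ {t | δ ≤ l₀ t} + δ * ν₁ {t | δ ≤ l₁ t} := by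
        rw [mul_add]
        gcongr
        exact fun t ht => (h_sep t).resolve_left ht
    _ ≤ ∫⁻ t, l₀ t ∂ν₀ + ∫⁻ t, l₁ t ∂ν₁ :=
        add_le_add (mul_meas_ge_le_lintegral hl₀ δ) (mul_meas_ge_le_lintegral hl₁ δ)

section Uniform

variable {a b : ℝ}

theorem isProbabilityMeasure_unif (hb : 0 < b) : IsProbabilityMeasure (unif b) := by
  constructor
  rw [unif, Measure.smul_apply, smul_eq_mul, Measure.restrict_apply_univ, volume_Icc, sub_zero,
    ← ENNReal.ofReal_mul (by positivity), inv_mul_cancel₀ hb.ne', ENNReal.ofReal_one]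

/-- Transport map from `U([0, b])` to `U([0, a])` for `0 < a < b`: it fixes `[0, a]` and maps
`(a, b]` affinely onto `(0, a]`. The induced coupling maximizes the probability that both
variables agree. -/
noncomputable def squeeze (a b u : ℝ) : ℝ := if u ≤ a then u else a / (b - a) * (u - a)

theorem measurable_squeeze (a b : ℝ) : Measurable (squeeze a b) :=
  Measurable.ite measurableSet_Iic measurable_id (by fun_prop)

theorem measurableSet_ne_squeeze (a b : ℝ) : MeasurableSet {u | u ≠ squeeze a b u} :=
  (measurableSet_eq_fun measurable_id (measurable_squeeze a b)).compl

theorem map_squeeze_restrict_Icc (a b : ℝ) :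
    (volume.restrict (Set.Icc 0 a)).map (squeeze a b) = volume.restrict (Set.Icc 0 a) := by
  have h_eq : squeeze a b =ᵐ[volume.restrict (Set.Icc 0 a)] id :=
    (ae_restrict_iff' measurableSet_Icc).2 (.of_forall fun u hu => if_pos hu.2)
  rw [Measure.map_congr h_eq, Measure.map_id]

theorem map_squeeze_restrict_Ioc (ha : 0 < a) (hab : a < b) :
    (volume.restrict (Set.Ioc a b)).map (squeeze a b)
      = ENNReal.ofReal ((b - a) / a) • volume.restrict (Set.Icc 0 a) := by
  have hba : 0 < b - a := sub_pos.2 hab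
  have h_pos : 0 < a / (b - a) := div_pos ha hba
  have h_eq : squeeze a b =ᵐ[volume.restrict (Set.Ioc a b)] (a / (b - a) * ·) ∘ (· - a) :=
    (ae_restrict_iff' measurableSet_Ioc).2 (.of_forall fun u hu => if_neg hu.1.not_ge)
  have h_preimage : (a / (b - a) * ·) ∘ (· - a) ⁻¹' Set.Ioc 0 a = Set.Ioc a b := by
    rw [Set.preimage_comp, Set.preimage_const_mul_Ioc₀ _ _ h_pos, Set.preimage_sub_const_Ioc]
    congr 1 <;> field_simp <;> ring
  have h_meas : Measurable ((a / (b - a) * ·) ∘ (· - a)) := by fun_prop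
  rw [Measure.map_congr h_eq, ← h_preimage, ← Measure.restrict_map h_meas measurableSet_Ioc,
    ← Measure.map_map (by fun_prop) (by fun_prop), map_sub_right_eq_self,
    map_volume_mul_left h_pos.ne', Measure.restrict_smul, abs_of_pos (inv_pos.2 h_pos), inv_div,
    restrict_Ioc_eq_restrict_Icc]

theorem map_squeeze_unif (ha : 0 < a) (hab : a < b) : (unif b).map (squeeze a b) = unif a := by
  have hb : 0 < b := ha.trans hab
  have h_split : volume.restrict (Set.Icc 0 b)
      = volume.restrict (Set.Icc 0 a) + volume.restrict (Set.Ioc a b) := by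
    rw [← Set.Icc_union_Ioc_eq_Icc ha.le hab.le, Measure.restrict_union
      ((Set.Iic_disjoint_Ioc le_rfl).mono_left Set.Icc_subset_Iic_self) measurableSet_Ioc]
  have h_const : b⁻¹ * (1 + (b - a) / a) = a⁻¹ := by field_simp; ring
  rw [unif, unif, Measure.map_smul, h_split, Measure.map_add _ _ (measurable_squeeze a b),
    map_squeeze_restrict_Icc, map_squeeze_restrict_Ioc ha hab]
  nth_rw 1 [← one_smul ℝ≥0∞ (volume.restrict (Set.Icc 0 a))]
  rw [← add_smul, smul_smul, ← ENNReal.ofReal_one,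
    ← ENNReal.ofReal_add zero_le_one (div_pos (sub_pos.2 hab) ha).le,
    ← ENNReal.ofReal_mul (inv_pos.2 hb).le, h_const]

theorem unif_ne_squeeze_le (a : ℝ) (hb : 0 < b) :
    unif b {u | u ≠ squeeze a b u} ≤ ENNReal.ofReal (1 - a / b) := by
  have h_subset : {u | u ≠ squeeze a b u} ∩ Set.Icc 0 b ⊆ Set.Ioc a b :=
    fun u ⟨h_ne, h_mem⟩ => ⟨lt_of_not_ge fun h => h_ne (if_pos h).symm, h_mem.2⟩
  rw [unif, Measure.smul_apply, smul_eq_mul,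
    Measure.restrict_apply (measurableSet_ne_squeeze a b)]
  calc ENNReal.ofReal b⁻¹ * volume ({u | u ≠ squeeze a b u} ∩ Set.Icc 0 b)
      ≤ ENNReal.ofReal b⁻¹ * volume (Set.Ioc a b) := by gcongr
    _ = ENNReal.ofReal (1 - a / b) := by
        rw [volume_Ioc, ← ENNReal.ofReal_mul (inv_pos.2 hb).le]
        congr 1
        field_simp

theorem map_squeeze_pi_unif {ι : Type*} [Fintype ι] (ha : 0 < a) (hab : a < b) :
    (Measure.pi fun _ : ι => unif b).map (fun u i => squeeze a b (u i))
      = Measure.pi fun _ : ι => unif a := by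
  have := isProbabilityMeasure_unif ha
  have := isProbabilityMeasure_unif (ha.trans hab)
  have : SigmaFinite ((unif b).map (squeeze a b)) := by
    rw [map_squeeze_unif ha hab]
    infer_instance
  rw [Measure.pi_map_pi fun _ => (measurable_squeeze a b).aemeasurable, map_squeeze_unif ha hab]

theorem lintegral_hammingDist_squeeze_le (n : ℕ) (a : ℝ) (hb : 0 < b) :
    ∫⁻ u, (hammingDist u (fun i => squeeze a b (u i)) : ℝ≥0∞) ∂Measure.pi (fun _ : Fin n => unif b)
      ≤ n * ENNReal.ofReal (1 - a / b) := by
  have := isProbabilityMeasure_unif hb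
  rw [lintegral_hammingDist_pi (unif b) (f := fun u => u)
    (measurableSet_ne_squeeze a b), Fintype.card_fin]
  gcongr
  exact unif_ne_squeeze_le a hb

/-- The risk of the mechanism `M` at the parameter `θ` of the uniform support model, for the
squared loss. -/
noncomputable def unifRisk {n : ℕ} (M : Kernel (Fin n → ℝ) ℝ) (θ : ℝ) : ℝ≥0∞ :=
  ∫⁻ x, ∫⁻ t, ENNReal.ofReal (|t - θ| ^ 2) ∂(M x) ∂(Measure.pi fun _ : Fin n => unif θ)

theorem unifRisk_eq_lintegral_bind {n : ℕ} (M : Kernel (Fin n → ℝ) ℝ) (θ : ℝ) :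
    unifRisk M θ = ∫⁻ t, ENNReal.ofReal (|t - θ| ^ 2)
      ∂((Measure.pi fun _ : Fin n => unif θ).bind M) :=
  (Measure.lintegral_bind M.aemeasurable (by fun_prop)).symm

theorem ofReal_sq_half_sub_le_or (a b t : ℝ) :
    ENNReal.ofReal (((b - a) / 2) ^ 2) ≤ ENNReal.ofReal (|t - b| ^ 2)
      ∨ ENNReal.ofReal (((b - a) / 2) ^ 2) ≤ ENNReal.ofReal (|t - a| ^ 2) := by
  have h_triangle : |b - a| ≤ |t - b| + |t - a| := by
    rw [abs_sub_comm t b]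
    exact abs_sub_le b t a
  have h_half : |(b - a) / 2| = |b - a| / 2 := by rw [abs_div, abs_two]
  rcases le_total |t - a| |t - b| with h | h
  · refine .inl (ENNReal.ofReal_le_ofReal (sq_le_sq.2 ?_))
    rw [abs_abs, h_half]
    linarith
  · refine .inr (ENNReal.ofReal_le_ofReal (sq_le_sq.2 ?_))
    rw [abs_abs, h_half]
    linarith

theorem HasTestErrorBound.mul_le_unifRisk_add {n : ℕ} {M : Kernel (Fin n → ℝ) ℝ} {A B : ℝ≥0∞}
    (h : HasTestErrorBound M A B) (hB : B ≠ ⊤) (ha : 0 < a) (hab : a < b) :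
    ENNReal.ofReal (((b - a) / 2) ^ 2) * (A - B * (n * ENNReal.ofReal (1 - a / b)))
      ≤ unifRisk M b + unifRisk M a := by
  have := isProbabilityMeasure_unif (ha.trans hab)
  have h_squeeze : Measurable fun (u : Fin n → ℝ) i => squeeze a b (u i) :=
    measurable_pi_lambda _ fun i => (measurable_squeeze a b).comp (measurable_pi_apply i)
  rw [unifRisk_eq_lintegral_bind, unifRisk_eq_lintegral_bind]
  refine mul_le_lintegral_add_lintegral_of_testError (by fun_prop) (by fun_prop)
    (ofReal_sq_half_sub_le_or a b) fun S hS => ?_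
  calc A - B * (n * ENNReal.ofReal (1 - a / b))
      ≤ A - B * ∫⁻ u, (hammingDist u (fun i => squeeze a b (u i)) : ℝ≥0∞)
          ∂Measure.pi (fun _ : Fin n => unif b) := by
        gcongr
        exact lintegral_hammingDist_squeeze_le n a (ha.trans hab)
    _ ≤ _ := by
        have h_coupling := h.sub_le hB (Measure.pi fun _ : Fin n => unif b) measurable_id
          h_squeeze hS
        rwa [Measure.map_id, map_squeeze_pi_unif ha hab] at h_coupling

theorem le_unifPrivMinimax_of_hasTestErrorBound {n : ℕ} {C : Kernel (Fin n → ℝ) ℝ → Prop}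
    {A B Δ : ℝ} (hB : 0 ≤ B) (hΔ₀ : 0 < Δ) (hΔ₁ : Δ < 1)
    (h : ∀ M : Kernel (Fin n → ℝ) ℝ, IsMarkovKernel M → C M →
      HasTestErrorBound M (ENNReal.ofReal A) (ENNReal.ofReal B)) :
    ENNReal.ofReal (Δ ^ 2 / 8 * (A - B * (n * Δ))) ≤ unifPrivMinimax n C := by
  refine le_iInf₂ fun M ⟨hM, hCM, _⟩ => ?_
  change _ ≤ ⨆ θ ∈ Set.Ioc (0 : ℝ) 1, unifRisk M θ
  have h_le_sup {θ : ℝ} (hθ : θ ∈ Set.Ioc (0 : ℝ) 1) :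
      unifRisk M θ ≤ ⨆ θ ∈ Set.Ioc (0 : ℝ) 1, unifRisk M θ :=
    le_iSup₂ (f := fun θ (_ : θ ∈ Set.Ioc (0 : ℝ) 1) => unifRisk M θ) θ hθ
  have h_add := (h M hM hCM).mul_le_unifRisk_add ENNReal.ofReal_ne_top (sub_pos.2 hΔ₁)
    (sub_lt_self 1 hΔ₀)
  rw [div_one, sub_sub_cancel, ← ENNReal.ofReal_natCast n, ← ENNReal.ofReal_mul n.cast_nonneg,
    ← ENNReal.ofReal_mul hB, ← ENNReal.ofReal_sub _ (by positivity),
    ← ENNReal.ofReal_mul (sq_nonneg _)] at h_add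
  refine (ENNReal.mul_le_mul_iff_right two_ne_zero ENNReal.ofNat_ne_top).1 ?_
  calc 2 * ENNReal.ofReal (Δ ^ 2 / 8 * (A - B * (n * Δ)))
      = ENNReal.ofReal ((Δ / 2) ^ 2 * (A - B * (n * Δ))) := by
        rw [← ENNReal.ofReal_ofNat 2, ← ENNReal.ofReal_mul zero_le_two]
        ring_nf
    _ ≤ unifRisk M 1 + unifRisk M (1 - Δ) := h_add
    _ ≤ 2 * ⨆ θ ∈ Set.Ioc (0 : ℝ) 1, unifRisk M θ := by
        rw [two_mul]
        exact add_le_add (h_le_sup ⟨one_pos, le_rfl⟩)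
          (h_le_sup ⟨sub_pos.2 hΔ₁, sub_le_self 1 hΔ₀.le⟩)

theorem le_unifPrivMinimax_isDP (n : ℕ) {ε Δ : ℝ} (hε : 0 ≤ ε) (hΔ₀ : 0 < Δ) (hΔ₁ : Δ < 1) :
    ENNReal.ofReal (Δ ^ 2 / 8 * exp (-(n * ε * Δ))) ≤ unifPrivMinimax n fun M => IsDP M ε 0 := by
  set s := n * ε * Δ with hs
  have h_bound := le_unifPrivMinimax_of_hasTestErrorBound (C := fun M => IsDP M ε 0) (n := n)
    (by positivity) hΔ₀ hΔ₁ fun M _ hM => hM.hasTestErrorBound hε s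
  have h_eq : exp (-s) * (1 + s) - exp (-s) * ε * (n * Δ) = exp (-s) := by rw [hs]; ring
  rwa [h_eq] at h_bound

theorem le_unifPrivMinimax_isZCDP (n : ℕ) {ρ Δ : ℝ} (hρ : 0 ≤ ρ) (hΔ₀ : 0 < Δ) (hΔ₁ : Δ < 1) :
    ENNReal.ofReal (Δ ^ 2 / 8 * (1 - √(ρ / 2) * (n * Δ)))
      ≤ unifPrivMinimax n fun M => IsZCDP M ρ := by
  refine le_unifPrivMinimax_of_hasTestErrorBound (sqrt_nonneg _) hΔ₀ hΔ₁ fun M _ hM => ?_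
  rw [ENNReal.ofReal_one]
  exact hM.hasTestErrorBound hρ

end Uniform

/-- **Private minimax lower bounds for the uniform support model**:
(i) if `n ε > 1` then the minimax risk over `ε`-DP mechanisms is at least
`e^{-1} / (8 (nε)²)`;
(ii) if `n √ρ > 1` then the minimax risk over `ρ`-zCDP mechanisms is at least
`(1 - 1/√2) / (8 n² ρ)`. -/
theorem uniform_private_minimax_lb (n : ℕ) :
    (∀ ε : ℝ, 0 < ε → 1 < n * ε →
      ENNReal.ofReal (Real.exp (-1) / (8 * (n * ε) ^ 2))
        ≤ unifPrivMinimax n (fun M => IsDP M ε 0)) ∧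
    (∀ ρ : ℝ, 0 < ρ → 1 < n * Real.sqrt ρ →
      ENNReal.ofReal ((1 - 1 / Real.sqrt 2) / (8 * (n : ℝ) ^ 2 * ρ))
        ≤ unifPrivMinimax n (fun M => IsZCDP M ρ)) := by
  refine ⟨fun ε hε hnε => ?_, fun ρ hρ hnρ => ?_⟩
  · have h_pos : 0 < n * ε := one_pos.trans hnε
    convert le_unifPrivMinimax_isDP n hε.le (inv_pos.2 h_pos) (inv_lt_one_of_one_lt₀ hnε) using 2
    rw [mul_inv_cancel₀ h_pos.ne']
    field_simp
  · have h_pos : 0 < n * √ρ := one_pos.trans hnρ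
    have h_mul : √(ρ / 2) * (n * (n * √ρ)⁻¹) = 1 / √2 := by
      rw [sqrt_div hρ.le]
      field_simp [left_ne_zero_of_mul h_pos.ne', right_ne_zero_of_mul h_pos.ne']
    convert le_unifPrivMinimax_isZCDP n hρ.le (inv_pos.2 h_pos) (inv_lt_one_of_one_lt₀ hnρ)
      using 2
    rw [h_mul, inv_pow, mul_pow, sq_sqrt hρ.le]
    field_simp
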